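/- Let log J be an α-Hölder g-function with unique g-measure μ. Then for every α-Hölder a:Ω→ℂ and every fixed x∈Ω, the limit lim_{s→1⁺} (s−1) ζ₊(s) exists and equals (1/h_μ(σ)) ∫_Ω a dμ. -/

import Mathlib

open Real MeasureTheory Filter Topology Set

open scoped Classical

namespace GS

/-- The full shift space `Ω = 𝒜^ℕ`. -/
abbrev Omega (𝒜 : Type) : Type := ℕ → 𝒜

variable {𝒜 : Type}

/-- The left shift `σ(x₁,x₂,…) = (x₂,x₃,…)`. -/
def shift (x : Omega 𝒜) : Omega 𝒜 := fun n => x (n + 1)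

/-- Prepending a symbol: `qx = (q,x₁,x₂,…)`. -/
def cons (q : 𝒜) (x : Omega 𝒜) : Omega 𝒜 := fun n => Nat.casesOn n q x

/-- Concatenation `wx` of a finite word `w ∈ 𝒜^k` with `x ∈ Ω`. -/
def concat {k : ℕ} (w : Fin k → 𝒜) (x : Omega 𝒜) : Omega 𝒜 :=
  fun n => if h : n < k then w ⟨n, h⟩ else x (n - k)

/-- The metric `d(x,y) = 2^{-N(x,y)}`, `N(x,y) = inf{k ≥ 1 : x_k ≠ y_k}`
(sequences are indexed from `0` in Lean, whence the `+ 1`). -/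
noncomputable def dOmega (x y : Omega 𝒜) : ℝ :=
  if x = y then 0 else (1 / 2 : ℝ) ^ (sInf {k : ℕ | x k ≠ y k} + 1)

/-- `a : Ω → E` is `α`-Hölder (w.r.t. `dOmega`):
`Hol_α(a) = sup_{x≠y} ‖a x - a y‖ / d(x,y)^α < ∞`. -/
def IsHolderW (α : ℝ) {E : Type*} [NormedAddCommGroup E] (a : Omega 𝒜 → E) : Prop :=
  ∃ C : ℝ, ∀ x y : Omega 𝒜, ‖a x - a y‖ ≤ C * (dOmega x y) ^ α

/-- The Hölder constant `Hol_α(a) = sup_{x≠y} ‖a x - a y‖ / d(x,y)^α`. -/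
noncomputable def HolConst (α : ℝ) {E : Type*} [NormedAddCommGroup E] (a : Omega 𝒜 → E) : ℝ :=
  sSup {r : ℝ | ∃ x y : Omega 𝒜, x ≠ y ∧ r = ‖a x - a y‖ / (dOmega x y) ^ α}

/-- `J` is a `g`-function: continuous, strictly positive, with `∑_{q∈𝒜} J(qx) = 1`. -/
def IsGFunction [Fintype 𝒜] [TopologicalSpace 𝒜] (J : Omega 𝒜 → ℝ) : Prop :=
  Continuous J ∧ (∀ x, 0 < J x) ∧ ∀ x : Omega 𝒜, ∑ q : 𝒜, J (cons q x) = 1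

/-- The Ruelle transfer operator `(L_f φ)(x) = ∑_{q∈𝒜} e^{f(qx)} φ(qx)`. -/
noncomputable def ruelle [Fintype 𝒜] {E : Type*} [AddCommMonoid E] [Module ℝ E]
    (f : Omega 𝒜 → ℝ) (φ : Omega 𝒜 → E) : Omega 𝒜 → E :=
  fun x => ∑ q : 𝒜, Real.exp (f (cons q x)) • φ (cons q x)

/-- Birkhoff sum `S_k(f) = ∑_{j=0}^{k-1} f ∘ σ^j`. -/
def birkhoff (f : Omega 𝒜 → ℝ) (k : ℕ) (x : Omega 𝒜) : ℝ :=
  ∑ j ∈ Finset.range k, f (shift^[j] x)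

/-- `𝕁(wx) = exp (S_k(log J)(wx))` for a word `w` of length `k`. -/
noncomputable def JBirk (J : Omega 𝒜 → ℝ) (k : ℕ) (w : Fin k → 𝒜) (x : Omega 𝒜) : ℝ :=
  Real.exp (birkhoff (fun z => Real.log (J z)) k (concat w x))

/-- `ζ₊(s) = ∑_{k≥1} ∑_{w∈𝒜^k} a(wx) 𝕁(wx)^s`. -/
noncomputable def zetaPlus [Fintype 𝒜] (J : Omega 𝒜 → ℝ) (a : Omega 𝒜 → ℂ) (x : Omega 𝒜)
    (s : ℝ) : ℂ :=
  ∑' k : ℕ, ∑ w : Fin (k + 1) → 𝒜, a (concat w x) * (((JBirk J (k + 1) w x) ^ s : ℝ) : ℂ)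

/-- `ζ₋(s) = ∑_{k≥1} ∑_{w∈𝒜^k} a(wy) 𝕁(wx)^s`. -/
noncomputable def zetaMinus [Fintype 𝒜] (J : Omega 𝒜 → ℝ) (a : Omega 𝒜 → ℂ) (x y : Omega 𝒜)
    (s : ℝ) : ℂ :=
  ∑' k : ℕ, ∑ w : Fin (k + 1) → 𝒜, a (concat w y) * (((JBirk J (k + 1) w x) ^ s : ℝ) : ℂ)

/-- `L_{log J}^* μ = μ`, i.e. `μ` is a `g`-measure of `J`, tested against continuous functions. -/
def IsGMeasure [Fintype 𝒜] [TopologicalSpace 𝒜] [MeasurableSpace 𝒜]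
    (J : Omega 𝒜 → ℝ) (μ : Measure (Omega 𝒜)) : Prop :=
  IsProbabilityMeasure μ ∧
    ∀ φ : Omega 𝒜 → ℂ, Continuous φ →
      ∫ x, ruelle (fun z => Real.log (J z)) φ x ∂μ = ∫ x, φ x ∂μ

/-- The cylinder set determined by a finite word. -/
def cyl {k : ℕ} (w : Fin k → 𝒜) : Set (Omega 𝒜) := {x | ∀ i : Fin k, x (i : ℕ) = w i}

/-- Entropy of the partition into cylinders of length `n`. -/
noncomputable def blockEntropy [Fintype 𝒜] [MeasurableSpace 𝒜] (μ : Measure (Omega 𝒜))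
    (n : ℕ) : ℝ :=
  ∑ w : Fin n → 𝒜, Real.negMulLog (μ (cyl w)).toReal

/-- Kolmogorov–Sinai entropy `h_μ(σ)` of a shift-invariant measure, computed through the
generating partition into cylinders: `h_μ(σ) = lim_n H_n/n = inf_{n≥1} H_n/n`. -/
noncomputable def KSentropy [Fintype 𝒜] [MeasurableSpace 𝒜] (μ : Measure (Omega 𝒜)) : ℝ :=
  ⨅ n : ℕ, blockEntropy μ (n + 1) / (n + 1)

/-- Topological pressure `P(f) = sup {h_μ(σ) + ∫ f dμ}` over shift-invariant Borel
probability measures. -/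
noncomputable def pressure [Fintype 𝒜] [MeasurableSpace 𝒜] (f : Omega 𝒜 → ℝ) : ℝ :=
  sSup {r : ℝ | ∃ μ : Measure (Omega 𝒜), IsProbabilityMeasure μ ∧
    Measure.map shift μ = μ ∧ r = KSentropy μ + ∫ x, f x ∂μ}

/-- `μ` is an equilibrium state of `f`. -/
def IsEquilibrium [Fintype 𝒜] [MeasurableSpace 𝒜] (f : Omega 𝒜 → ℝ)
    (μ : Measure (Omega 𝒜)) : Prop :=
  IsProbabilityMeasure μ ∧ Measure.map shift μ = μ ∧
    KSentropy μ + ∫ x, f x ∂μ = pressure f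

/-- The Walters class `W(Ω,σ)`:
`sup_{n≥1} sup_{w∈𝒜^n} |S_n(f)(wx) − S_n(f)(wy)| → 0` as `d(x,y) → 0`. -/
def WaltersClass [TopologicalSpace 𝒜] (f : Omega 𝒜 → ℝ) : Prop :=
  Continuous f ∧ ∀ ε > (0:ℝ), ∃ δ > (0:ℝ), ∀ x y : Omega 𝒜, dOmega x y < δ →
    ∀ (n : ℕ) (w : Fin n → 𝒜),
      |birkhoff f n (concat w x) - birkhoff f n (concat w y)| ≤ ε

/-- The set `W*` of finite (nonempty) words over `𝒜`. -/
def Words (𝒜 : Type) : Type := Σ k : ℕ, Fin (k + 1) → 𝒜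

end GS
namespace GS

/-!
For `s > 1` the backward orbit of `x`, with weights `𝕁(wx)^s`, carries a finite measure `m_s` with
`∫ φ dm_s = φ x + ∫ L_{s log J} φ dm_s`, and `ζ₊(s) = ∫ a dm_s - a x`. As `s → 1⁺`, the operators
`L_{s log J}` converge to `L_{log J}`, so the normalised `m_s` become `L_{log J}`-invariant and, by
weak compactness, converge to the unique `g`-measure `μ`. Applied to `φ = 1`, the same identity says
that `1 / ((s - 1) m_s(Ω))` is the mean of `(1 - L_{s log J} 1) / (s - 1)`, which tends to
`∫ -log J dμ`.

That this integral is the entropy follows from `μ[w] = ∫ 𝕁(w·) dμ`: Jensen's inequality gives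
`n ∫ -log J dμ ≤ H_n`, while Gibbs' inequality against the weights `𝕁(wx)` bounds `H_n` by a
Birkhoff sum whose Cesàro means converge to the same integral.
-/

section Words

variable {𝒜 : Type}

lemma cons_shift (x : Omega 𝒜) : cons (x 0) (shift x) = x := by
  funext n
  cases n <;> rfl

lemma concat_zero (w : Fin 0 → 𝒜) (x : Omega 𝒜) : concat w x = x := by
  funext n
  simp [concat]

lemma concat_cons {k : ℕ} (q : 𝒜) (w : Fin k → 𝒜) (x : Omega 𝒜) :
    concat (Fin.cons q w : Fin (k + 1) → 𝒜) x = cons q (concat w x) := by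
  funext n
  cases n with
  | zero => rfl
  | succ n => simp only [concat, cons, Nat.add_lt_add_iff_right, Nat.add_sub_add_right]; rfl

lemma birkhoff_zero (f : Omega 𝒜 → ℝ) (x : Omega 𝒜) : birkhoff f 0 x = 0 :=
  Finset.sum_range_zero _

lemma birkhoff_succ (f : Omega 𝒜 → ℝ) (k : ℕ) (x : Omega 𝒜) :
    birkhoff f (k + 1) x = f x + birkhoff f k (shift x) := by
  rw [birkhoff, Finset.sum_range_succ', add_comm]
  rfl

lemma birkhoff_const_mul (c : ℝ) (f : Omega 𝒜 → ℝ) (k : ℕ) (x : Omega 𝒜) :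
    birkhoff (fun z => c * f z) k x = c * birkhoff f k x :=
  (Finset.mul_sum _ _ _).symm

lemma sum_words_succ [Fintype 𝒜] {E : Type*} [AddCommMonoid E] {k : ℕ}
    (F : (Fin (k + 1) → 𝒜) → E) :
    ∑ w, F w = ∑ w : Fin k → 𝒜, ∑ q : 𝒜, F (Fin.cons q w) := by
  rw [← (Fin.consEquiv fun _ => 𝒜).sum_comp, Fintype.sum_prod_type_right]
  rfl

end Words

section HolderContinuity

variable {𝒜 : Type}

lemma dOmega_nonneg (x y : Omega 𝒜) : 0 ≤ dOmega x y := by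
  rw [dOmega]
  positivity

lemma dOmega_le_of_forall_lt_eq {x y : Omega 𝒜} {n : ℕ} (hxy : ∀ i < n, x i = y i) :
    dOmega x y ≤ (1 / 2) ^ (n + 1) := by
  rw [dOmega]
  split_ifs with heq
  · positivity
  · have hn : n ≤ sInf {k | x k ≠ y k} :=
      le_csInf (Function.ne_iff.1 heq) fun k hk => not_lt.1 fun hlt => hk (hxy k hlt)
    exact pow_le_pow_of_le_one (by norm_num) (by norm_num) (by gcongr)

lemma tendsto_dOmega_nhds [TopologicalSpace 𝒜] [DiscreteTopology 𝒜] (x : Omega 𝒜) :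
    Tendsto (fun y => dOmega y x) (𝓝 x) (𝓝 0) := by
  refine tendsto_order.2 ⟨fun b hb => .of_forall fun y => hb.trans_le (dOmega_nonneg y x),
    fun ε hε => ?_⟩
  obtain ⟨n, hn⟩ := exists_pow_lt_of_lt_one hε (one_half_lt_one (α := ℝ))
  have hagree : ∀ᶠ y in 𝓝 x, ∀ i < n, y i = x i :=
    (finite_lt_nat n).eventually_all.2 fun i _ =>
      (continuous_apply i).continuousAt.eventually_mem (mem_nhds_discrete.2 rfl : {x i} ∈ 𝓝 (x i))
  filter_upwards [hagree] with y hy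
  calc dOmega y x ≤ (1 / 2) ^ (n + 1) := dOmega_le_of_forall_lt_eq hy
    _ ≤ (1 / 2) ^ n := pow_le_pow_of_le_one (by norm_num) (by norm_num) n.le_succ
    _ < ε := hn

lemma IsHolderW.continuous [TopologicalSpace 𝒜] [DiscreteTopology 𝒜] {E : Type*}
    [NormedAddCommGroup E] {α : ℝ} {a : Omega 𝒜 → E} (ha : IsHolderW α a) (hα : 0 < α) :
    Continuous a := by
  obtain ⟨C, hC⟩ := ha
  refine continuous_iff_continuousAt.2 fun x => tendsto_iff_norm_sub_tendsto_zero.2 ?_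
  refine squeeze_zero (fun y => norm_nonneg _) (fun y => hC y x) ?_
  simpa [Real.zero_rpow hα.ne'] using
    ((tendsto_dOmega_nhds x).rpow_const (.inr hα.le)).const_mul C

end HolderContinuity

lemma abs_one_sub_exp_neg_sub_le {u : ℝ} (hu : 0 ≤ u) : |1 - Real.exp (-u) - u| ≤ u ^ 2 := by
  have hlower := Real.one_sub_le_exp_neg u
  have hupper : Real.exp (-u) ≤ 1 - u + u ^ 2 := by
    rw [Real.exp_neg, inv_le_comm₀ (Real.exp_pos u) (by nlinarith)]
    refine le_trans ?_ (Real.add_one_le_exp u)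
    rw [inv_le_iff_one_le_mul₀ (by nlinarith)]
    nlinarith [pow_nonneg hu 3]
  rw [abs_le]
  constructor <;> linarith

section RuelleOperator

variable {𝒜 : Type} [Fintype 𝒜] {E : Type*}

lemma ruelle_one (f : Omega 𝒜 → ℝ) (x : Omega 𝒜) :
    ruelle f (1 : Omega 𝒜 → ℝ) x = ∑ q, Real.exp (f (cons q x)) := by
  simp [ruelle]

lemma iterate_ruelle_apply [AddCommMonoid E] [Module ℝ E] (f : Omega 𝒜 → ℝ) (k : ℕ)
    (φ : Omega 𝒜 → E) (x : Omega 𝒜) :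
    (ruelle f)^[k] φ x =
      ∑ w : Fin k → 𝒜, Real.exp (birkhoff f k (concat w x)) • φ (concat w x) := by
  induction k generalizing φ with
  | zero => simp [concat_zero, birkhoff_zero]
  | succ k ih =>
    have hexp : ∀ (q : 𝒜) (y : Omega 𝒜), Real.exp (birkhoff f (k + 1) (cons q y)) =
        Real.exp (birkhoff f k y) * Real.exp (f (cons q y)) := fun q y => by
      rw [birkhoff_succ, add_comm, Real.exp_add]
      rfl
    simp only [Function.iterate_succ_apply, ih, sum_words_succ, hexp, mul_smul, concat_cons,
      ruelle, Finset.smul_sum]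

section Norm

variable [NormedAddCommGroup E] [NormedSpace ℝ E]

lemma norm_ruelle_le {f : Omega 𝒜 → ℝ} {φ : Omega 𝒜 → E} {B : ℝ} (hφ : ∀ y, ‖φ y‖ ≤ B)
    (x : Omega 𝒜) : ‖ruelle f φ x‖ ≤ ruelle f (1 : Omega 𝒜 → ℝ) x * B := by
  rw [ruelle_one, Finset.sum_mul]
  refine norm_sum_le_of_le _ fun q _ => ?_
  rw [norm_smul, Real.norm_of_nonneg (Real.exp_pos _).le]
  gcongr
  exact hφ _

lemma norm_iterate_ruelle_le {f : Omega 𝒜 → ℝ} {ρ : ℝ}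
    (hρ : ∀ x, ruelle f (1 : Omega 𝒜 → ℝ) x ≤ ρ) {φ : Omega 𝒜 → E} {B : ℝ}
    (hφ : ∀ y, ‖φ y‖ ≤ B) (k : ℕ) (x : Omega 𝒜) : ‖(ruelle f)^[k] φ x‖ ≤ ρ ^ k * B := by
  induction k generalizing x with
  | zero => simpa using hφ x
  | succ k ih =>
    have hB : 0 ≤ ρ ^ k * B := (norm_nonneg _).trans (ih x)
    rw [Function.iterate_succ_apply', pow_succ', mul_assoc]
    exact (norm_ruelle_le ih x).trans (mul_le_mul_of_nonneg_right (hρ x) hB)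

lemma norm_ruelle_sub_ruelle_le {f g : Omega 𝒜 → ℝ} {δ : ℝ} (hgf : ∀ y, g y ≤ f y)
    (hfg : ∀ y, f y - g y ≤ δ) {φ : Omega 𝒜 → E} {B : ℝ} (hφ : ∀ y, ‖φ y‖ ≤ B)
    (x : Omega 𝒜) :
    ‖ruelle f φ x - ruelle g φ x‖ ≤ ruelle f (1 : Omega 𝒜 → ℝ) x * (δ * B) := by
  have hexp : ∀ y, |Real.exp (f y) - Real.exp (g y)| ≤ Real.exp (f y) * δ := by
    intro y
    have hfac : Real.exp (g y) = Real.exp (f y) * Real.exp (-(f y - g y)) := by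
      rw [← Real.exp_add]; congr 1; ring
    rw [abs_of_nonneg (sub_nonneg.2 (Real.exp_le_exp.2 (hgf y))), hfac, ← mul_one_sub]
    gcongr
    linarith [Real.one_sub_le_exp_neg (f y - g y), hfg y]
  rw [ruelle_one, Finset.sum_mul, ruelle, ruelle, ← Finset.sum_sub_distrib]
  refine norm_sum_le_of_le _ fun q _ => ?_
  rw [← sub_smul, norm_smul, Real.norm_eq_abs, ← mul_assoc]
  exact mul_le_mul (hexp _) (hφ _) (norm_nonneg _) ((abs_nonneg _).trans (hexp _))

end Norm

lemma abs_ruelle_one_sub_ruelle_one_sub_le {f g : Omega 𝒜 → ℝ} {δ : ℝ}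
    (hgf : ∀ y, g y ≤ f y) (hfg : ∀ y, f y - g y ≤ δ) (x : Omega 𝒜) :
    |ruelle f (1 : Omega 𝒜 → ℝ) x - ruelle g (1 : Omega 𝒜 → ℝ) x - ruelle f (f - g) x| ≤
      ruelle f (1 : Omega 𝒜 → ℝ) x * δ ^ 2 := by
  simp only [ruelle_one]
  rw [ruelle, ← Finset.sum_sub_distrib, ← Finset.sum_sub_distrib, Finset.sum_mul]
  refine (Finset.abs_sum_le_sum_abs _ _).trans (Finset.sum_le_sum fun q _ => ?_)
  set y := cons q x
  have hfac : Real.exp (f y) - Real.exp (g y) - Real.exp (f y) • (f - g) y =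
      Real.exp (f y) * (1 - Real.exp (-(f y - g y)) - (f y - g y)) := by
    rw [show g y = f y + -(f y - g y) by ring, Real.exp_add]
    simp only [smul_eq_mul, Pi.sub_apply]
    ring_nf
  have hu : 0 ≤ f y - g y := sub_nonneg.2 (hgf y)
  rw [hfac, abs_mul, abs_of_pos (Real.exp_pos _)]
  gcongr
  exact (abs_one_sub_exp_neg_sub_le hu).trans (pow_le_pow_left₀ hu (hfg y) 2)

end RuelleOperator

section Continuity

variable {𝒜 : Type} [TopologicalSpace 𝒜]

lemma continuous_shift : Continuous (shift : Omega 𝒜 → Omega 𝒜) :=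
  continuous_pi fun n => continuous_apply (n + 1)

lemma continuous_cons (q : 𝒜) : Continuous (cons q) :=
  continuous_pi fun n => by
    cases n with
    | zero => exact continuous_const
    | succ n => exact continuous_apply n

lemma continuous_concat {k : ℕ} (w : Fin k → 𝒜) : Continuous (concat w) :=
  continuous_pi fun n => by
    by_cases hn : n < k
    · simpa only [concat, dif_pos hn] using continuous_const
    · simpa only [concat, dif_neg hn] using continuous_apply (n - k)

lemma continuous_birkhoff {f : Omega 𝒜 → ℝ} (hf : Continuous f) (k : ℕ) :
    Continuous (birkhoff f k) :=
  continuous_finsetSum _ fun j _ => hf.comp (continuous_shift.iterate j)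

lemma continuous_ruelle [Fintype 𝒜] {E : Type*} [NormedAddCommGroup E] [NormedSpace ℝ E]
    {f : Omega 𝒜 → ℝ} (hf : Continuous f) {φ : Omega 𝒜 → E} (hφ : Continuous φ) :
    Continuous (ruelle f φ) :=
  continuous_finsetSum _ fun q _ =>
    (Real.continuous_exp.comp (hf.comp (continuous_cons q))).smul (hφ.comp (continuous_cons q))

lemma summable_iterate_ruelle_one [Fintype 𝒜] {f : Omega 𝒜 → ℝ} (hf : Continuous f)
    (hlt : ∀ y, ruelle f (1 : Omega 𝒜 → ℝ) y < 1) (x : Omega 𝒜) :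
    Summable fun k => (ruelle f)^[k] (1 : Omega 𝒜 → ℝ) x := by
  obtain ⟨z, -, hz⟩ := isCompact_univ.exists_isMaxOn ⟨x, mem_univ x⟩
    (continuous_ruelle hf (continuous_one (M := ℝ))).continuousOn
  have hnonneg : 0 ≤ ruelle f (1 : Omega 𝒜 → ℝ) z := by
    rw [ruelle_one]
    positivity
  refine (summable_geometric_of_lt_one hnonneg (hlt z)).of_norm_bounded fun k => ?_
  simpa using norm_iterate_ruelle_le (f := f) (φ := (1 : Omega 𝒜 → ℝ))
    (fun y => hz (mem_univ y)) (B := 1) (fun y => by simp) k x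

end Continuity

section PoincareMeasure

variable {𝒜 : Type} [Fintype 𝒜] [MeasurableSpace 𝒜]

/-- The analogue for the full shift of the Patterson–Sullivan construction: the orbital measure
`∑ₖ ∑_{w ∈ 𝒜ᵏ} exp (Sₖ f (wx)) δ_{wx}` on the backward orbit of `x`. It is an infinite measure
as soon as the Poincaré series `∑ₖ (L_fᵏ 1)(x)` diverges. -/
noncomputable def poincareMeasure (f : Omega 𝒜 → ℝ) (x : Omega 𝒜) : Measure (Omega 𝒜) :=
  Measure.sum fun k => ∑ w : Fin k → 𝒜,
    ENNReal.ofReal (Real.exp (birkhoff f k (concat w x))) • Measure.dirac (concat w x)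

lemma isFiniteMeasure_poincareMeasure {f : Omega 𝒜 → ℝ} {x : Omega 𝒜}
    (hsum : Summable fun k => (ruelle f)^[k] (1 : Omega 𝒜 → ℝ) x) :
    IsFiniteMeasure (poincareMeasure f x) := by
  refine ⟨lt_of_eq_of_lt ?_ hsum.tsum_ofReal_lt_top⟩
  rw [poincareMeasure, Measure.sum_apply _ MeasurableSet.univ]
  refine tsum_congr fun k => ?_
  rw [iterate_ruelle_apply, ENNReal.ofReal_sum_of_nonneg fun w _ => ?_]
  · simp
  · simpa using (Real.exp_pos _).le

instance neZero_poincareMeasure (f : Omega 𝒜 → ℝ) (x : Omega 𝒜) : NeZero (poincareMeasure f x) := by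
  refine ⟨fun hzero => ?_⟩
  have hfirst := Measure.le_sum (fun k => ∑ w : Fin k → 𝒜,
    ENNReal.ofReal (Real.exp (birkhoff f k (concat w x))) • Measure.dirac (concat w x)) 0
    univ
  have hmass : poincareMeasure f x univ = 0 := by rw [hzero]; rfl
  rw [← poincareMeasure, hmass] at hfirst
  simp [birkhoff_zero] at hfirst

section Integral

variable [MeasurableSingletonClass 𝒜] {E : Type*} [NormedAddCommGroup E] [NormedSpace ℝ E]
  [CompleteSpace E]

lemma hasSum_iterate_ruelle {f : Omega 𝒜 → ℝ} {x : Omega 𝒜} {φ : Omega 𝒜 → E}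
    (hφ : Integrable φ (poincareMeasure f x)) :
    HasSum (fun k => (ruelle f)^[k] φ x) (∫ y, φ y ∂poincareMeasure f x) := by
  refine (hasSum_integral_measure hφ).congr_fun fun k => ?_
  rw [integral_finsetSum_measure fun w _ => ?_]
  · simp [iterate_ruelle_apply, integral_smul_measure, (Real.exp_pos _).le]
  · exact (integrable_dirac (by simp)).smul_measure (by simp)

lemma integral_ruelle_poincareMeasure {f : Omega 𝒜 → ℝ} {x : Omega 𝒜} {φ : Omega 𝒜 → E}
    (hφ : Integrable φ (poincareMeasure f x))
    (hLφ : Integrable (ruelle f φ) (poincareMeasure f x)) :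
    ∫ y, ruelle f φ y ∂poincareMeasure f x = ∫ y, φ y ∂poincareMeasure f x - φ x := by
  have hshifted : HasSum (fun k => (ruelle f)^[k + 1] φ x)
      (∫ y, φ y ∂poincareMeasure f x - φ x) := by
    simpa using (hasSum_nat_add_iff' 1).2 (hasSum_iterate_ruelle hφ)
  exact (hasSum_iterate_ruelle hLφ).unique hshifted

end Integral

end PoincareMeasure

section WeakConvergence

lemma integrable_of_continuous {X E : Type*} [TopologicalSpace X] [CompactSpace X]
    [MeasurableSpace X] [OpensMeasurableSpace X] [NormedAddCommGroup E]
    {μ : Measure X} [IsFiniteMeasure μ] {φ : X → E}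
    (hφ : Continuous φ) : Integrable φ μ :=
  hφ.integrable_of_hasCompactSupport (HasCompactSupport.of_compactSpace φ)

lemma tendsto_integral_of_tendsto {X 𝕜 ι : Type*} [TopologicalSpace X] [CompactSpace X]
    [MeasurableSpace X] [OpensMeasurableSpace X] [RCLike 𝕜] {l : Filter ι}
    {P : ι → ProbabilityMeasure X} {μ : ProbabilityMeasure X} (hP : Tendsto P l (𝓝 μ))
    {φ : X → 𝕜} (hφ : Continuous φ) :
    Tendsto (fun i => ∫ y, φ y ∂(P i : Measure X)) l (𝓝 (∫ y, φ y ∂(μ : Measure X))) :=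
  (ProbabilityMeasure.tendsto_iff_forall_integral_rclike_tendsto 𝕜).1 hP
    (BoundedContinuousFunction.mkOfCompact ⟨φ, hφ⟩)

variable {𝒜 : Type} [Fintype 𝒜] [TopologicalSpace 𝒜] [DiscreteTopology 𝒜] [MeasurableSpace 𝒜]
  [BorelSpace 𝒜]

theorem tendsto_of_asymptotically_invariant {ι : Type*} {l : Filter ι} {f : Omega 𝒜 → ℝ}
    (hf : Continuous f) {μ : ProbabilityMeasure (Omega 𝒜)}
    (huniq : ∀ ν : ProbabilityMeasure (Omega 𝒜), (∀ φ : Omega 𝒜 → ℂ, Continuous φ →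
      ∫ y, ruelle f φ y ∂(ν : Measure (Omega 𝒜)) = ∫ y, φ y ∂(ν : Measure (Omega 𝒜))) → ν = μ)
    {P : ι → ProbabilityMeasure (Omega 𝒜)}
    (hP : ∀ φ : Omega 𝒜 → ℂ, Continuous φ →
      Tendsto (fun i => ∫ y, φ y ∂(P i : Measure (Omega 𝒜)) -
        ∫ y, ruelle f φ y ∂(P i : Measure (Omega 𝒜))) l (𝓝 0)) :
    Tendsto P l (𝓝 μ) := by
  -- The probability measures form a compact space, so `P` converges along any ultrafilter; the
  -- limit is invariant and hence equals `μ`.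
  refine (tendsto_iff_ultrafilter _ _ _).2 fun u hu => ?_
  have hlim : Tendsto P u (𝓝 (u.map P).lim) := Ultrafilter.le_nhds_lim (u.map P)
  rwa [huniq (u.map P).lim fun φ hφ => ?_] at hlim
  have hdiff := (tendsto_integral_of_tendsto hlim hφ).sub
    (tendsto_integral_of_tendsto hlim (continuous_ruelle hf hφ))
  exact (sub_eq_zero.1 (tendsto_nhds_unique hdiff ((hP φ hφ).mono_left hu))).symm

lemma average_sub_average_ruelle {f : Omega 𝒜 → ℝ} (hf : Continuous f) (x : Omega 𝒜)
    [IsFiniteMeasure (poincareMeasure f x)] {E : Type*} [NormedAddCommGroup E]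
    [NormedSpace ℝ E] [CompleteSpace E] {φ : Omega 𝒜 → E} (hφ : Continuous φ) :
    ⨍ y, φ y ∂poincareMeasure f x - ⨍ y, ruelle f φ y ∂poincareMeasure f x =
      ((poincareMeasure f x).real univ)⁻¹ • φ x := by
  rw [average_eq, average_eq, ← smul_sub, integral_ruelle_poincareMeasure
    (integrable_of_continuous hφ) (integrable_of_continuous (continuous_ruelle hf hφ)),
    sub_sub_cancel]

end WeakConvergence

lemma norm_average_sub_average_le {X E : Type*} [MeasurableSpace X] [NormedAddCommGroup E]
    [NormedSpace ℝ E] {m : Measure X} [IsFiniteMeasure m] [NeZero m] {φ ψ : X → E} {C : ℝ}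
    (hφ : Integrable φ m) (hψ : Integrable ψ m) (hC : ∀ y, ‖φ y - ψ y‖ ≤ C) :
    ‖⨍ y, φ y ∂m - ⨍ y, ψ y ∂m‖ ≤ C := by
  rw [average, average, ← integral_sub hφ.to_average hψ.to_average]
  simpa using norm_integral_le_of_norm_le_const (μ := (m univ)⁻¹ • m) (.of_forall hC)

section Perturbation

variable {𝒜 : Type} [Fintype 𝒜] [TopologicalSpace 𝒜] [DiscreteTopology 𝒜] [MeasurableSpace 𝒜]
  [BorelSpace 𝒜] {f g : Omega 𝒜 → ℝ} {δ : ℝ} {x : Omega 𝒜}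
  [IsFiniteMeasure (poincareMeasure g x)]

lemma norm_average_ruelle_sub_average_ruelle_le (hf : Continuous f) (hg : Continuous g)
    (hf_one : ruelle f (1 : Omega 𝒜 → ℝ) = 1) (hgf : ∀ y, g y ≤ f y)
    (hfg : ∀ y, f y - g y ≤ δ) {E : Type*} [NormedAddCommGroup E] [NormedSpace ℝ E]
    {φ : Omega 𝒜 → E} {B : ℝ} (hφ : Continuous φ) (hB : ∀ y, ‖φ y‖ ≤ B) :
    ‖⨍ y, ruelle f φ y ∂poincareMeasure g x - ⨍ y, ruelle g φ y ∂poincareMeasure g x‖ ≤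
      δ * B :=
  norm_average_sub_average_le (integrable_of_continuous (continuous_ruelle hf hφ))
    (integrable_of_continuous (continuous_ruelle hg hφ)) fun y => by
      simpa only [hf_one, Pi.one_apply, one_mul] using norm_ruelle_sub_ruelle_le hgf hfg hB y

lemma inv_mass_poincareMeasure_eq_average (hg : Continuous g) :
    ((poincareMeasure g x).real univ)⁻¹ =
      ⨍ y, (1 - ruelle g (1 : Omega 𝒜 → ℝ) y) ∂poincareMeasure g x := by
  have hone : Continuous (1 : Omega 𝒜 → ℝ) := continuous_one
  have hmass := average_sub_average_ruelle hg x hone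
  rw [average, average, ← integral_sub (integrable_of_continuous hone).to_average
    (integrable_of_continuous (continuous_ruelle hg hone)).to_average] at hmass
  simpa [average] using hmass.symm

lemma inv_mass_poincareMeasure_le (hf : Continuous f) (hg : Continuous g)
    (hf_one : ruelle f (1 : Omega 𝒜 → ℝ) = 1) (hgf : ∀ y, g y ≤ f y)
    (hfg : ∀ y, f y - g y ≤ δ) : ((poincareMeasure g x).real univ)⁻¹ ≤ δ := by
  have hone : Continuous (1 : Omega 𝒜 → ℝ) := continuous_one
  calc ((poincareMeasure g x).real univ)⁻¹
      = ⨍ y, ruelle f (1 : Omega 𝒜 → ℝ) y ∂poincareMeasure g x -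
          ⨍ y, ruelle g (1 : Omega 𝒜 → ℝ) y ∂poincareMeasure g x := by
        rw [hf_one, average_sub_average_ruelle hg x hone, Pi.one_apply, smul_eq_mul, mul_one]
    _ ≤ δ * 1 := (le_abs_self _).trans <|
        norm_average_ruelle_sub_average_ruelle_le hf hg hf_one hgf hfg hone (by simp)
    _ = δ := mul_one δ

lemma norm_average_sub_average_ruelle_le (hf : Continuous f) (hg : Continuous g)
    (hf_one : ruelle f (1 : Omega 𝒜 → ℝ) = 1) (hgf : ∀ y, g y ≤ f y)
    (hfg : ∀ y, f y - g y ≤ δ) {E : Type*} [NormedAddCommGroup E] [NormedSpace ℝ E]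
    [CompleteSpace E] {φ : Omega 𝒜 → E} {B : ℝ}
    (hφ : Continuous φ) (hB : ∀ y, ‖φ y‖ ≤ B) :
    ‖⨍ y, φ y ∂poincareMeasure g x - ⨍ y, ruelle f φ y ∂poincareMeasure g x‖ ≤ 2 * δ * B := by
  have hmass := inv_mass_poincareMeasure_le (x := x) hf hg hf_one hgf hfg
  calc _ ≤ ‖⨍ y, φ y ∂poincareMeasure g x - ⨍ y, ruelle g φ y ∂poincareMeasure g x‖ +
        ‖⨍ y, ruelle g φ y ∂poincareMeasure g x - ⨍ y, ruelle f φ y ∂poincareMeasure g x‖ :=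
        norm_sub_le_norm_sub_add_norm_sub _ _ _
    _ ≤ δ * B + δ * B := by
        gcongr
        · rw [average_sub_average_ruelle hg x hφ, norm_smul,
            Real.norm_of_nonneg (inv_nonneg.2 measureReal_nonneg)]
          exact mul_le_mul hmass (hB x) (norm_nonneg _)
            ((inv_nonneg.2 measureReal_nonneg).trans hmass)
        · rw [norm_sub_rev]
          exact norm_average_ruelle_sub_average_ruelle_le hf hg hf_one hgf hfg hφ hB
    _ = 2 * δ * B := by ring

lemma abs_inv_mass_sub_average_ruelle_sub_le (hf : Continuous f) (hg : Continuous g)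
    (hf_one : ruelle f (1 : Omega 𝒜 → ℝ) = 1) (hgf : ∀ y, g y ≤ f y)
    (hfg : ∀ y, f y - g y ≤ δ) :
    |((poincareMeasure g x).real univ)⁻¹ - ⨍ y, ruelle f (f - g) y ∂poincareMeasure g x| ≤
      δ ^ 2 := by
  rw [inv_mass_poincareMeasure_eq_average hg]
  refine norm_average_sub_average_le (φ := fun y => 1 - ruelle g (1 : Omega 𝒜 → ℝ) y)
    (integrable_of_continuous (continuous_const.sub (continuous_ruelle hg continuous_one)))
    (integrable_of_continuous (continuous_ruelle hf (hf.sub hg))) fun y => ?_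
  simpa only [hf_one, Pi.one_apply, one_mul, Real.norm_eq_abs] using
    abs_ruelle_one_sub_ruelle_one_sub_le hgf hfg y

end Perturbation

section GFunction

variable {𝒜 : Type}

lemma log_sub_mul_log_le {J : Omega 𝒜 → ℝ} {M s : ℝ} (hM : ∀ y, -Real.log (J y) ≤ M)
    (hs : 1 < s) (y : Omega 𝒜) : Real.log (J y) - s * Real.log (J y) ≤ (s - 1) * M := by
  nlinarith [hM y]

variable [Fintype 𝒜] [TopologicalSpace 𝒜] {J : Omega 𝒜 → ℝ}

lemma IsGFunction.continuous_log (hJ : IsGFunction J) :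
    Continuous fun z => Real.log (J z) :=
  hJ.1.log fun z => (hJ.2.1 z).ne'

lemma IsGFunction.continuous_neg_log (hJ : IsGFunction J) :
    Continuous fun z => -Real.log (J z) :=
  hJ.continuous_log.neg

lemma IsGFunction.continuous_mul_log (hJ : IsGFunction J) (s : ℝ) :
    Continuous fun z => s * Real.log (J z) :=
  continuous_const.mul hJ.continuous_log

lemma IsGFunction.ruelle_log (hJ : IsGFunction J) {E : Type*} [AddCommMonoid E] [Module ℝ E]
    (φ : Omega 𝒜 → E) (x : Omega 𝒜) :
    ruelle (fun z => Real.log (J z)) φ x = ∑ q, J (cons q x) • φ (cons q x) := by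
  simp only [ruelle, Real.exp_log (hJ.2.1 _)]

lemma IsGFunction.ruelle_log_one (hJ : IsGFunction J) :
    ruelle (fun z => Real.log (J z)) (1 : Omega 𝒜 → ℝ) = 1 := by
  funext x
  simpa [hJ.ruelle_log] using hJ.2.2 x

lemma IsGFunction.lt_one [Nontrivial 𝒜] (hJ : IsGFunction J) (x : Omega 𝒜) : J x < 1 := by
  obtain ⟨q, hq⟩ := exists_ne (x 0)
  calc J x = J (cons (x 0) (shift x)) := by rw [cons_shift]
    _ < ∑ p, J (cons p (shift x)) := Finset.single_lt_sum (f := fun p => J (cons p (shift x)))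
        hq (Finset.mem_univ _) (Finset.mem_univ q) (hJ.2.1 _) fun p _ _ => (hJ.2.1 _).le
    _ = 1 := hJ.2.2 (shift x)

lemma IsGFunction.log_neg [Nontrivial 𝒜] (hJ : IsGFunction J) (x : Omega 𝒜) :
    Real.log (J x) < 0 :=
  Real.log_neg (hJ.2.1 x) (hJ.lt_one x)

lemma IsGFunction.exists_forall_neg_log_le (hJ : IsGFunction J) :
    ∃ M, ∀ x, -Real.log (J x) ≤ M := by
  obtain ⟨M, hM⟩ := (isCompact_range hJ.continuous_neg_log).bddAbove
  exact ⟨M, fun x => hM ⟨x, rfl⟩⟩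

lemma IsGFunction.mul_log_le_log [Nontrivial 𝒜] (hJ : IsGFunction J) {s : ℝ} (hs : 1 < s)
    (y : Omega 𝒜) :
    s * Real.log (J y) ≤ Real.log (J y) := by
  nlinarith [hJ.log_neg y]

lemma IsGFunction.ruelle_mul_log_one_lt_one [Nontrivial 𝒜] (hJ : IsGFunction J) {s : ℝ}
    (hs : 1 < s) (x : Omega 𝒜) :
    ruelle (fun z => s * Real.log (J z)) (1 : Omega 𝒜 → ℝ) x < 1 := by
  have hone := congrFun hJ.ruelle_log_one x
  rw [ruelle_one, Pi.one_apply] at hone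
  rw [← hone, ruelle_one]
  refine Finset.sum_lt_sum_of_nonempty Finset.univ_nonempty fun q _ => Real.exp_lt_exp.2 ?_
  nlinarith [hJ.log_neg (cons q x)]

lemma IsGFunction.continuous_JBirk (hJ : IsGFunction J) {k : ℕ} (w : Fin k → 𝒜) :
    Continuous (JBirk J k w) :=
  Real.continuous_exp.comp ((continuous_birkhoff hJ.continuous_log k).comp (continuous_concat w))

lemma IsGFunction.sum_JBirk (hJ : IsGFunction J) (k : ℕ) (x : Omega 𝒜) :
    ∑ w : Fin k → 𝒜, JBirk J k w x = 1 := by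
  have hone := congrFun (Function.iterate_fixed hJ.ruelle_log_one k) x
  simpa [iterate_ruelle_apply, JBirk] using hone

end GFunction

section ZetaMeasure

variable {𝒜 : Type} [Fintype 𝒜]

lemma zetaPlus_eq_tsum_iterate_ruelle (J : Omega 𝒜 → ℝ) (a : Omega 𝒜 → ℂ) (x : Omega 𝒜)
    (s : ℝ) :
    zetaPlus J a x s = ∑' k, (ruelle fun z => s * Real.log (J z))^[k + 1] a x := by
  refine tsum_congr fun k => ?_
  rw [iterate_ruelle_apply]
  refine Finset.sum_congr rfl fun w _ => ?_
  rw [birkhoff_const_mul, JBirk, ← Real.exp_mul, mul_comm s, Complex.real_smul, mul_comm]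

variable [MeasurableSpace 𝒜]

/-- The orbital measure of the potential `s log J`, whose integrals are
`∫ a = a x + ζ₊(s)`; it is finite for `s > 1`. -/
noncomputable abbrev zetaMeasure (J : Omega 𝒜 → ℝ) (x : Omega 𝒜) (s : ℝ) :
    Measure (Omega 𝒜) :=
  poincareMeasure (fun z => s * Real.log (J z)) x

variable [TopologicalSpace 𝒜] {J : Omega 𝒜 → ℝ}

lemma IsGFunction.isFiniteMeasure_zetaMeasure [Nontrivial 𝒜] (hJ : IsGFunction J)
    (x : Omega 𝒜) {s : ℝ} (hs : 1 < s) : IsFiniteMeasure (zetaMeasure J x s) :=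
  isFiniteMeasure_poincareMeasure <| summable_iterate_ruelle_one
    (hJ.continuous_mul_log s) (hJ.ruelle_mul_log_one_lt_one hs) x

lemma zetaPlus_eq_integral_sub [DiscreteTopology 𝒜] [BorelSpace 𝒜] {x : Omega 𝒜} {s : ℝ}
    [IsFiniteMeasure (zetaMeasure J x s)] {a : Omega 𝒜 → ℂ} (ha : Continuous a) :
    zetaPlus J a x s = ∫ y, a y ∂zetaMeasure J x s - a x := by
  rw [zetaPlus_eq_tsum_iterate_ruelle]
  have hsum := hasSum_iterate_ruelle (f := fun z => s * Real.log (J z)) (x := x)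
    (integrable_of_continuous ha)
  simpa using ((hasSum_nat_add_iff' 1).2 hsum).tsum_eq

end ZetaMeasure

section GMeasure

variable {𝒜 : Type} [Fintype 𝒜] [TopologicalSpace 𝒜] [MeasurableSpace 𝒜] {J : Omega 𝒜 → ℝ}
  {μ : Measure (Omega 𝒜)}

lemma IsGMeasure.integral_ruelle_log (hμ : IsGMeasure J μ) {φ : Omega 𝒜 → ℝ}
    (hφ : Continuous φ) :
    ∫ y, ruelle (fun z => Real.log (J z)) φ y ∂μ = ∫ y, φ y ∂μ := by
  have hcast := hμ.2 (fun y => (φ y : ℂ)) (Complex.continuous_ofReal.comp hφ)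
  have hruelle (y : Omega 𝒜) : ruelle (fun z => Real.log (J z)) (fun y => (φ y : ℂ)) y =
      (ruelle (fun z => Real.log (J z)) φ y : ℝ) := by
    simp [ruelle]
  simp only [hruelle] at hcast
  exact_mod_cast (integral_ofReal.symm.trans hcast).trans integral_ofReal

lemma IsGMeasure.integral_iterate_ruelle_log (hμ : IsGMeasure J μ) (hJ : IsGFunction J)
    {φ : Omega 𝒜 → ℝ} (hφ : Continuous φ) (k : ℕ) :
    ∫ y, (ruelle fun z => Real.log (J z))^[k] φ y ∂μ = ∫ y, φ y ∂μ := by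
  induction k generalizing φ with
  | zero => rfl
  | succ k ih =>
    rw [Function.iterate_succ, Function.comp_apply, ih (continuous_ruelle hJ.continuous_log hφ),
      hμ.integral_ruelle_log hφ]

lemma IsGMeasure.integral_comp_shift (hμ : IsGMeasure J μ) (hJ : IsGFunction J)
    {φ : Omega 𝒜 → ℝ} (hφ : Continuous φ) : ∫ y, φ (shift y) ∂μ = ∫ y, φ y ∂μ := by
  have hruelle (y : Omega 𝒜) : ruelle (fun z => Real.log (J z)) (φ ∘ shift) y = φ y := by
    rw [hJ.ruelle_log]
    change ∑ q, J (cons q y) * φ y = φ y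
    rw [← Finset.sum_mul, hJ.2.2, one_mul]
  calc ∫ y, φ (shift y) ∂μ = ∫ y, ruelle (fun z => Real.log (J z)) (φ ∘ shift) y ∂μ :=
        (hμ.integral_ruelle_log (hφ.comp continuous_shift)).symm
    _ = ∫ y, φ y ∂μ := by simp only [hruelle]

variable [DiscreteTopology 𝒜] [BorelSpace 𝒜]

lemma IsGMeasure.integral_neg_log_pos [Nontrivial 𝒜] (hμ : IsGMeasure J μ)
    (hJ : IsGFunction J) : 0 < ∫ y, -Real.log (J y) ∂μ := by
  have := hμ.1
  have hpos (y : Omega 𝒜) : 0 < -Real.log (J y) := neg_pos.2 (hJ.log_neg y)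
  rw [integral_pos_iff_support_of_nonneg (fun y => (hpos y).le)
    (integrable_of_continuous hJ.continuous_neg_log)]
  rw [Function.support_eq_univ fun y => (hpos y).ne', measure_univ]
  exact zero_lt_one

lemma IsGMeasure.integral_birkhoff (hμ : IsGMeasure J μ) (hJ : IsGFunction J)
    {φ : Omega 𝒜 → ℝ} (hφ : Continuous φ) (k : ℕ) :
    ∫ y, birkhoff φ k y ∂μ = k * ∫ y, φ y ∂μ := by
  have := hμ.1
  induction k with
  | zero => simp [birkhoff_zero]
  | succ k ih =>
    have hshift : Continuous fun y => birkhoff φ k (shift y) :=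
      (continuous_birkhoff hφ k).comp continuous_shift
    simp only [birkhoff_succ]
    rw [integral_add (integrable_of_continuous hφ) (integrable_of_continuous hshift),
      hμ.integral_comp_shift hJ (continuous_birkhoff hφ k), ih]
    push_cast
    ring

end GMeasure

section Cylinders

variable {𝒜 : Type}

lemma concat_mem_cyl_iff {k : ℕ} {v w : Fin k → 𝒜} {x : Omega 𝒜} :
    concat v x ∈ cyl w ↔ v = w := by
  simp [cyl, concat, funext_iff]

lemma mem_cyl_iff {k : ℕ} {w : Fin k → 𝒜} {y : Omega 𝒜} :
    y ∈ cyl w ↔ (fun i : Fin k => y i) = w :=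
  funext_iff.symm

lemma isClopen_cyl [TopologicalSpace 𝒜] [DiscreteTopology 𝒜] {k : ℕ} (w : Fin k → 𝒜) :
    IsClopen (cyl w) := by
  have hcont : Continuous fun (y : Omega 𝒜) (i : Fin k) => y i :=
    continuous_pi fun i => continuous_apply (i : ℕ)
  convert (isClopen_discrete {w}).preimage hcont
  ext y
  exact mem_cyl_iff

variable [Fintype 𝒜] [TopologicalSpace 𝒜] [DiscreteTopology 𝒜] [MeasurableSpace 𝒜]
  [BorelSpace 𝒜] {J : Omega 𝒜 → ℝ} {μ : Measure (Omega 𝒜)}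

lemma IsGMeasure.measureReal_cyl (hμ : IsGMeasure J μ) (hJ : IsGFunction J) {k : ℕ}
    (w : Fin k → 𝒜) : μ.real (cyl w) = ∫ y, JBirk J k w y ∂μ := by
  have hcont : Continuous ((cyl w).indicator (1 : Omega 𝒜 → ℝ)) :=
    continuous_one.indicator fun y hy => absurd hy (by simp [(isClopen_cyl w).frontier_eq])
  rw [← integral_indicator_one (isClopen_cyl w).isOpen.measurableSet,
    ← hμ.integral_iterate_ruelle_log hJ hcont k]
  refine integral_congr_ae (.of_forall fun y => ?_)
  simp only [iterate_ruelle_apply]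
  rw [Finset.sum_eq_single w]
  · rw [indicator_of_mem (concat_mem_cyl_iff.2 rfl), Pi.one_apply, smul_eq_mul, mul_one, JBirk]
  · intro v _ hne
    rw [indicator_of_notMem (mt concat_mem_cyl_iff.1 hne), smul_zero]
  · simp

lemma IsGMeasure.mul_integral_neg_log_le_blockEntropy (hμ : IsGMeasure J μ) (hJ : IsGFunction J)
    (k : ℕ) :
    k * ∫ y, -Real.log (J y) ∂μ ≤ blockEntropy μ k := by
  have := hμ.1
  have hJw (w : Fin k → 𝒜) : Integrable (JBirk J k w) μ :=
    integrable_of_continuous (hJ.continuous_JBirk w)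
  have hlogJw (w : Fin k → 𝒜) : Integrable (fun y => Real.negMulLog (JBirk J k w y)) μ :=
    integrable_of_continuous (Real.continuous_negMulLog.comp (hJ.continuous_JBirk w))
  have hbirkhoff : Continuous fun y => -birkhoff (fun z => Real.log (J z)) k y :=
    (continuous_birkhoff hJ.continuous_log k).neg
  calc k * ∫ y, -Real.log (J y) ∂μ
      = ∫ y, -birkhoff (fun z => Real.log (J z)) k y ∂μ := by
        rw [integral_neg, integral_neg, hμ.integral_birkhoff hJ hJ.continuous_log, mul_neg]
    _ = ∫ y, ∑ w : Fin k → 𝒜, Real.negMulLog (JBirk J k w y) ∂μ := by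
        rw [← hμ.integral_iterate_ruelle_log hJ hbirkhoff k]
        simp [iterate_ruelle_apply, Real.negMulLog, JBirk]
    _ = ∑ w : Fin k → 𝒜, ∫ y, Real.negMulLog (JBirk J k w y) ∂μ :=
        integral_finsetSum _ fun w _ => hlogJw w
    _ ≤ blockEntropy μ k := by
        refine Finset.sum_le_sum fun w _ => ?_
        rw [← measureReal_def, hμ.measureReal_cyl hJ]
        exact Real.concaveOn_negMulLog.le_map_integral Real.continuous_negMulLog.continuousOn
          isClosed_Ici (.of_forall fun y => (Real.exp_pos _).le) (hJw w) (hlogJw w)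

end Cylinders

lemma negMulLog_le_sub_mul_log {m p : ℝ} (hm : 0 ≤ m) (hp : 0 < p) :
    Real.negMulLog m ≤ p - m - m * Real.log p := by
  rcases hm.eq_or_lt with rfl | hm
  · simpa using hp.le
  · have hlog := mul_le_mul_of_nonneg_left (Real.log_le_sub_one_of_pos (div_pos hp hm)) hm.le
    rw [Real.log_div hp.ne' hm.ne', mul_sub, mul_sub, mul_div_cancel₀ _ hm.ne'] at hlog
    rw [Real.negMulLog]
    linarith

section Splicing

variable {𝒜 : Type}

/-- The sequence that follows `y` on its first `n` coordinates and is then continued by `x`. -/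
def splice (n : ℕ) (x y : Omega 𝒜) : Omega 𝒜 := concat (fun i : Fin n => y i) x

lemma splice_apply_of_lt {n i : ℕ} (hi : i < n) (x y : Omega 𝒜) : splice n x y i = y i := by
  simp [splice, concat, hi]

lemma shift_splice_succ (n : ℕ) (x y : Omega 𝒜) :
    shift (splice (n + 1) x y) = splice n x (shift y) := by
  funext i
  simp [shift, splice, concat]

lemma tendsto_splice [TopologicalSpace 𝒜] (x y : Omega 𝒜) :
    Tendsto (fun n => splice n x y) atTop (𝓝 y) :=
  tendsto_pi_nhds.2 fun i => tendsto_const_nhds.congr' <|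
    (eventually_gt_atTop i).mono fun _ hi => (splice_apply_of_lt hi x y).symm

lemma continuous_splice [TopologicalSpace 𝒜] (n : ℕ) (x : Omega 𝒜) :
    Continuous (splice n x) :=
  continuous_pi fun i => by
    by_cases hi : i < n
    · simpa only [splice_apply_of_lt hi] using continuous_apply i
    · simpa only [splice, concat, dif_neg hi] using continuous_const

lemma tendsto_integral_comp_splice [Finite 𝒜] [TopologicalSpace 𝒜] [DiscreteTopology 𝒜]
    [MeasurableSpace 𝒜] [BorelSpace 𝒜] {μ : Measure (Omega 𝒜)} [IsFiniteMeasure μ]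
    {φ : Omega 𝒜 → ℝ} (hφ : Continuous φ) (x : Omega 𝒜) :
    Tendsto (fun n => ∫ y, φ (splice n x y) ∂μ) atTop (𝓝 (∫ y, φ y ∂μ)) := by
  obtain ⟨B, hB⟩ := (isCompact_range hφ.norm).bddAbove
  exact tendsto_integral_of_dominated_convergence (fun _ => B)
    (fun n => (hφ.comp (continuous_splice n x)).aestronglyMeasurable) (integrable_const B)
    (fun n => .of_forall fun y => hB ⟨_, rfl⟩)
    (.of_forall fun y => (hφ.tendsto y).comp (tendsto_splice x y))

variable [Fintype 𝒜] [TopologicalSpace 𝒜] [DiscreteTopology 𝒜] [MeasurableSpace 𝒜]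
  [BorelSpace 𝒜] {J : Omega 𝒜 → ℝ} {μ : Measure (Omega 𝒜)}

lemma IsGMeasure.integral_birkhoff_splice (hμ : IsGMeasure J μ) (hJ : IsGFunction J)
    {φ : Omega 𝒜 → ℝ} (hφ : Continuous φ) (x : Omega 𝒜) (n : ℕ) :
    ∫ y, birkhoff φ n (splice n x y) ∂μ =
      ∑ i ∈ Finset.range n, ∫ y, φ (splice (i + 1) x y) ∂μ := by
  have := hμ.1
  induction n with
  | zero => simp [birkhoff_zero]
  | succ n ih =>
    have hhead : Continuous fun y => φ (splice (n + 1) x y) := hφ.comp (continuous_splice _ x)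
    have htail : Continuous fun y => birkhoff φ n (splice n x y) :=
      (continuous_birkhoff hφ n).comp (continuous_splice n x)
    have htail_shift : Continuous fun y => birkhoff φ n (splice n x (shift y)) :=
      htail.comp continuous_shift
    simp only [birkhoff_succ, shift_splice_succ]
    rw [integral_add (integrable_of_continuous hhead) (integrable_of_continuous htail_shift),
      hμ.integral_comp_shift hJ htail, ih, Finset.sum_range_succ, add_comm]

lemma sum_measureReal_cyl_mul [IsFiniteMeasure μ] {k : ℕ} (F : (Fin k → 𝒜) → ℝ) :
    ∑ w, μ.real (cyl w) * F w = ∫ y, F (fun i => y i) ∂μ := by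
  have hcyl (w : Fin k → 𝒜) : MeasurableSet (cyl w) := (isClopen_cyl w).isOpen.measurableSet
  have hF (y : Omega 𝒜) :
      F (fun i => y i) = ∑ w : Fin k → 𝒜, (cyl w).indicator (fun _ => F w) y := by
    simp [indicator_apply, mem_cyl_iff]
  simp only [hF]
  rw [integral_finsetSum _ fun w _ => (integrable_const _).indicator (hcyl w)]
  simp [integral_indicator_const _ (hcyl _)]

lemma IsGMeasure.blockEntropy_le_neg_integral_birkhoff (hμ : IsGMeasure J μ) (hJ : IsGFunction J)
    (x : Omega 𝒜) (k : ℕ) :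
    blockEntropy μ k ≤ -∫ y, birkhoff (fun z => Real.log (J z)) k (splice k x y) ∂μ := by
  have := hμ.1
  have hmass : ∑ w : Fin k → 𝒜, μ.real (cyl w) = 1 := by
    simpa using sum_measureReal_cyl_mul (μ := μ) (k := k) fun _ => 1
  calc blockEntropy μ k
      ≤ ∑ w : Fin k → 𝒜, (JBirk J k w x - μ.real (cyl w) -
          μ.real (cyl w) * Real.log (JBirk J k w x)) :=
        Finset.sum_le_sum fun w _ =>
          negMulLog_le_sub_mul_log measureReal_nonneg (Real.exp_pos _)
    _ = -∑ w : Fin k → 𝒜, μ.real (cyl w) * Real.log (JBirk J k w x) := by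
        rw [Finset.sum_sub_distrib, Finset.sum_sub_distrib, hJ.sum_JBirk, hmass]
        ring
    _ = _ := by
        rw [sum_measureReal_cyl_mul]
        simp only [JBirk, Real.log_exp, splice]

theorem IsGMeasure.KSentropy_eq_integral_neg_log (hμ : IsGMeasure J μ) (hJ : IsGFunction J) :
    KSentropy μ = ∫ y, -Real.log (J y) ∂μ := by
  have := hμ.1
  obtain ⟨x⟩ := nonempty_of_isProbabilityMeasure μ
  have hlower (n : ℕ) : ∫ y, -Real.log (J y) ∂μ ≤ blockEntropy μ (n + 1) / (n + 1) := by
    rw [le_div_iff₀' (by positivity)]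
    exact_mod_cast hμ.mul_integral_neg_log_le_blockEntropy hJ (n + 1)
  refine le_antisymm ?_ (le_ciInf hlower)
  have hcesaro : Tendsto (fun n : ℕ => -(((n + 1 : ℕ) : ℝ)⁻¹ *
      ∑ i ∈ Finset.range (n + 1), ∫ y, Real.log (J (splice (i + 1) x y)) ∂μ)) atTop
      (𝓝 (∫ y, -Real.log (J y) ∂μ)) := by
    rw [integral_neg]
    exact (((tendsto_integral_comp_splice hJ.continuous_log x).comp
      (tendsto_add_atTop_nat 1)).cesaro.comp (tendsto_add_atTop_nat 1)).neg
  refine ge_of_tendsto' hcesaro fun n => ?_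
  calc KSentropy μ ≤ blockEntropy μ (n + 1) / (n + 1) :=
        ciInf_le ⟨_, forall_mem_range.2 hlower⟩ n
    _ ≤ (-∫ y, birkhoff (fun z => Real.log (J z)) (n + 1) (splice (n + 1) x y) ∂μ) / (n + 1) := by
        gcongr
        exact hμ.blockEntropy_le_neg_integral_birkhoff hJ x (n + 1)
    _ = -(((n + 1 : ℕ) : ℝ)⁻¹ *
          ∑ i ∈ Finset.range (n + 1), ∫ y, Real.log (J (splice (i + 1) x y)) ∂μ) := by
        rw [hμ.integral_birkhoff_splice hJ hJ.continuous_log, div_eq_inv_mul, mul_neg,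
          Nat.cast_succ]

end Splicing

lemma tendsto_sub_one_mul_const_atBot (C : ℝ) :
    Tendsto (fun s : Ioi (1 : ℝ) => ((s : ℝ) - 1) * C) atBot (𝓝 0) := by
  refine (tendsto_comp_coe_Ioi_atBot (f := fun s : ℝ => (s - 1) * C)).2 ?_
  refine tendsto_nhdsWithin_of_tendsto_nhds ?_
  have h : Continuous fun s : ℝ => (s - 1) * C := by fun_prop
  simpa using h.tendsto 1

section Asymptotics

variable {𝒜 : Type} [Fintype 𝒜] [Nontrivial 𝒜] [TopologicalSpace 𝒜] [DiscreteTopology 𝒜]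
  [MeasurableSpace 𝒜] [BorelSpace 𝒜] {J : Omega 𝒜 → ℝ}

theorem tendsto_average_zetaMeasure (hJ : IsGFunction J) {μ : Measure (Omega 𝒜)}
    (hμ : IsGMeasure J μ) (huniq : ∀ ν, IsGMeasure J ν → ν = μ) (x : Omega 𝒜)
    {𝕜 : Type*} [RCLike 𝕜] {φ : Omega 𝒜 → 𝕜} (hφ : Continuous φ) :
    Tendsto (fun s : Ioi (1 : ℝ) => ⨍ y, φ y ∂zetaMeasure J x s) atBot
      (𝓝 (∫ y, φ y ∂μ)) := by
  have hfin (s : Ioi (1 : ℝ)) := hJ.isFiniteMeasure_zetaMeasure x s.2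
  obtain ⟨M, hM⟩ := hJ.exists_forall_neg_log_le
  refine tendsto_integral_of_tendsto (μ := ⟨μ, hμ.1⟩) (P := fun s : Ioi (1 : ℝ) =>
    ⟨(zetaMeasure J x s univ)⁻¹ • zetaMeasure J x s, inferInstance⟩) ?_ hφ
  refine tendsto_of_asymptotically_invariant hJ.continuous_log
    (fun ν hν => Subtype.ext (huniq ν ⟨ν.2, hν⟩)) fun ψ hψ => ?_
  obtain ⟨B, hB⟩ := (isCompact_range hψ.norm).bddAbove
  refine squeeze_zero_norm (fun s => ?_) (tendsto_sub_one_mul_const_atBot (2 * M * B))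
  refine (norm_average_sub_average_ruelle_le hJ.continuous_log
    (hJ.continuous_mul_log s) hJ.ruelle_log_one (hJ.mul_log_le_log s.2)
    (log_sub_mul_log_le hM s.2) hψ fun y => hB ⟨y, rfl⟩).trans_eq ?_
  ring

lemma abs_inv_mass_zetaMeasure_sub_le (hJ : IsGFunction J) {M : ℝ}
    (hM : ∀ y, -Real.log (J y) ≤ M) (x : Omega 𝒜) {s : ℝ} (hs : 1 < s) :
    |((s - 1) * (zetaMeasure J x s).real univ)⁻¹ -
      ⨍ y, ruelle (fun z => Real.log (J z)) (fun z => -Real.log (J z)) y ∂zetaMeasure J x s| ≤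
        (s - 1) * M ^ 2 := by
  have hfin := hJ.isFiniteMeasure_zetaMeasure x hs
  have hs' : 0 < s - 1 := sub_pos.2 hs
  set I := ⨍ y, ruelle (fun z => Real.log (J z)) (fun z => -Real.log (J z)) y ∂zetaMeasure J x s
    with hI
  have hlinear : ⨍ y, ruelle (fun z => Real.log (J z))
      ((fun z => Real.log (J z)) - fun z => s * Real.log (J z)) y ∂zetaMeasure J x s =
        (s - 1) * I := by
    rw [hI, average, average, ← integral_const_mul]
    refine integral_congr_ae (.of_forall fun y => ?_)
    simp only [ruelle, Finset.mul_sum, Pi.sub_apply, smul_eq_mul]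
    exact Finset.sum_congr rfl fun q _ => by ring
  have hbound := abs_inv_mass_sub_average_ruelle_sub_le (x := x) hJ.continuous_log
    (hJ.continuous_mul_log s) hJ.ruelle_log_one (hJ.mul_log_le_log hs)
    (log_sub_mul_log_le hM hs)
  rw [hlinear] at hbound
  refine le_of_mul_le_mul_left ?_ hs'
  calc (s - 1) * |((s - 1) * (zetaMeasure J x s).real univ)⁻¹ - I|
      = |((zetaMeasure J x s).real univ)⁻¹ - (s - 1) * I| := by
        rw [← abs_of_pos hs', ← abs_mul, abs_of_pos hs', mul_sub, mul_inv,
          mul_inv_cancel_left₀ hs'.ne']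
    _ ≤ ((s - 1) * M) ^ 2 := hbound
    _ = (s - 1) * ((s - 1) * M ^ 2) := by ring

theorem tendsto_sub_one_mul_mass_zetaMeasure (hJ : IsGFunction J) {μ : Measure (Omega 𝒜)}
    (hμ : IsGMeasure J μ) (huniq : ∀ ν, IsGMeasure J ν → ν = μ) (x : Omega 𝒜) :
    Tendsto (fun s : Ioi (1 : ℝ) => ((s : ℝ) - 1) * (zetaMeasure J x s).real univ) atBot
      (𝓝 (∫ y, -Real.log (J y) ∂μ)⁻¹) := by
  obtain ⟨M, hM⟩ := hJ.exists_forall_neg_log_le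
  have haverage := tendsto_average_zetaMeasure hJ hμ huniq x
    (continuous_ruelle hJ.continuous_log hJ.continuous_neg_log)
  rw [hμ.integral_ruelle_log hJ.continuous_neg_log] at haverage
  have hdiff := squeeze_zero_norm (fun s : Ioi (1 : ℝ) => (Real.norm_eq_abs _).trans_le
      (abs_inv_mass_zetaMeasure_sub_le hJ hM x s.2))
    (tendsto_sub_one_mul_const_atBot (M ^ 2))
  have hinv := (hdiff.add haverage).inv₀
    (by simpa using (hμ.integral_neg_log_pos hJ).ne')
  simpa using hinv

theorem tendsto_sub_one_mul_zetaPlus (hJ : IsGFunction J) {μ : Measure (Omega 𝒜)}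
    (hμ : IsGMeasure J μ) (huniq : ∀ ν, IsGMeasure J ν → ν = μ) {a : Omega 𝒜 → ℂ}
    (ha : Continuous a) (x : Omega 𝒜) :
    Tendsto (fun s : ℝ => ((s : ℂ) - 1) * zetaPlus J a x s) (𝓝[>] 1)
      (𝓝 (((∫ y, -Real.log (J y) ∂μ)⁻¹ : ℝ) * ∫ y, a y ∂μ)) := by
  rw [← tendsto_comp_coe_Ioi_atBot]
  have hmass := tendsto_sub_one_mul_mass_zetaMeasure hJ hμ huniq x
  have haverage := tendsto_average_zetaMeasure hJ hμ huniq x ha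
  have hboundary := (Complex.continuous_ofReal.tendsto 0).comp (tendsto_sub_one_mul_const_atBot 1)
  have hlimit := (((Complex.continuous_ofReal.tendsto _).comp hmass).mul haverage).sub
    (hboundary.mul_const (a x))
  rw [Complex.ofReal_zero, zero_mul, sub_zero] at hlimit
  refine hlimit.congr fun s => ?_
  have hfin := hJ.isFiniteMeasure_zetaMeasure x s.2
  have hne : ((zetaMeasure J x s).real univ : ℂ) ≠ 0 := by
    exact_mod_cast (measureReal_ne_zero_iff (measure_ne_top _ _)).2 (NeZero.ne _)
  rw [zetaPlus_eq_integral_sub ha, average_eq, Complex.real_smul]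
  simp only [Function.comp_apply]
  push_cast
  field_simp

end Asymptotics

theorem statement1_general {𝒜 : Type} [Fintype 𝒜] [TopologicalSpace 𝒜] [DiscreteTopology 𝒜]
    [MeasurableSpace 𝒜] [BorelSpace 𝒜] (hcard : 2 ≤ Fintype.card 𝒜)
    (J : Omega 𝒜 → ℝ) (hJ : IsGFunction J)
    (μ : Measure (Omega 𝒜)) (hμ : IsGMeasure J μ)
    (huniq : ∀ ν : Measure (Omega 𝒜), IsGMeasure J ν → ν = μ)
    (a : Omega 𝒜 → ℂ) (ha : Continuous a) (x : Omega 𝒜) :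
    Tendsto (fun s : ℝ => ((s : ℂ) - 1) * zetaPlus J a x s) (𝓝[>] (1 : ℝ))
      (𝓝 ((((KSentropy μ)⁻¹ : ℝ) : ℂ) * ∫ z, a z ∂μ)) := by
  have : Nontrivial 𝒜 := Fintype.one_lt_card_iff_nontrivial.1 hcard
  rw [hμ.KSentropy_eq_integral_neg_log hJ]
  exact tendsto_sub_one_mul_zetaPlus hJ hμ huniq ha x

/-- Lemma `lemma-limzeta` of the paper.
If `log J` is an `α`-Hölder `g`-function with unique `g`-measure `μ`, then for every
`α`-Hölder `a : Ω → ℂ` and every `x ∈ Ω`,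
`lim_{s→1⁺} (s−1) ζ₊(s) = (1/h_μ(σ)) ∫ a dμ`. -/
theorem statement1 {𝒜 : Type} [Fintype 𝒜] [TopologicalSpace 𝒜] [DiscreteTopology 𝒜]
    [MeasurableSpace 𝒜] [BorelSpace 𝒜] (hcard : 2 ≤ Fintype.card 𝒜)
    (α : ℝ) (hα : α ∈ Set.Ioo (0 : ℝ) 1)
    (J : Omega 𝒜 → ℝ) (hJ : IsGFunction J)
    (hHolJ : IsHolderW α (fun z => Real.log (J z)))
    (μ : Measure (Omega 𝒜)) (hμ : IsGMeasure J μ)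
    (huniq : ∀ ν : Measure (Omega 𝒜), IsGMeasure J ν → ν = μ)
    (a : Omega 𝒜 → ℂ) (ha : IsHolderW α a) (x : Omega 𝒜) :
    Tendsto (fun s : ℝ => ((s : ℂ) - 1) * zetaPlus J a x s) (𝓝[>] (1 : ℝ))
      (𝓝 ((((KSentropy μ)⁻¹ : ℝ) : ℂ) * ∫ z, a z ∂μ)) :=
  statement1_general hcard J hJ μ hμ huniq a (ha.continuous hα.1) x

end GS
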